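/- Let M be a labeled MDP, φ an LTLf formula over AP, and A_φ a DFA over alphabet 2^{AP} whose language equals L(φ). Then the maximal probability of satisfying φ on M equals the maximal probability of reaching an accepting state in the product: max_{π ∈ Π} Pr(M^π ⊨ φ) = max_{σ} Pr^σ{ infinite paths of M × A_φ from (s_init, q_init) that visit some state (s,q) with q ∈ F }, where the maximum on the right ranges over all policies σ of M × A_φ. -/

import Mathlib

open scoped ENNReal

namespace LTLfMDP

/-- A labeled Markov decision process (data part): transition probabilities,
enabled actions, initial state and labeling function. -/
structure MDP (S A AP : Type) where
  P : S → A → S → ℝ≥0∞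
  enabled : S → Set A
  init : S
  label : S → Set AP

/-- A finite path from the initial state: the list of action/successor-state
steps taken (the implicit first state is `init`). -/
abbrev FinPath (S A : Type) := List (A × S)

/-- An infinite path from the initial state: at time `i` the action taken and
the successor state reached (the implicit first state is `init`). -/
abbrev InfPath (S A : Type) := ℕ → A × S

/-- A policy maps every finite path to an action. -/
abbrev Policy (S A : Type) := FinPath S A → A

variable {S A AP : Type}

/-- Well-formedness of a labeled MDP: every state has an enabled action and
the transition probabilities of enabled actions sum to one. -/
def MDP.IsWF [Fintype S] (M : MDP S A AP) : Prop :=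
  (∀ s : S, (M.enabled s).Nonempty) ∧
    ∀ (s : S) (a : A), a ∈ M.enabled s → (∑ s' : S, M.P s a s') = 1

/-- The last state of a finite path (`init` for the empty path). -/
def MDP.lastState (M : MDP S A AP) (l : FinPath S A) : S :=
  (l.map Prod.snd).getLastD M.init

/-- The `i`-th state `s_i` along a finite path (`s_0 = init`). -/
def MDP.stateAtF (M : MDP S A AP) (l : FinPath S A) (i : ℕ) : S :=
  M.lastState (l.take i)

/-- A finite path of the MDP: every action is enabled and every transition has
positive probability. -/
def MDP.ValidFin (M : MDP S A AP) (l : FinPath S A) : Prop :=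
  ∀ i (h : i < l.length),
    (l.get ⟨i, h⟩).1 ∈ M.enabled (M.stateAtF l i) ∧
      0 < M.P (M.stateAtF l i) (l.get ⟨i, h⟩).1 (l.get ⟨i, h⟩).2

/-- The `i`-th state `s_i` along an infinite path (`s_0 = init`). -/
def MDP.stateAtI (M : MDP S A AP) (w : InfPath S A) : ℕ → S
  | 0 => M.init
  | i + 1 => (w i).2

/-- An infinite path of the MDP: every action is enabled and every transition
has positive probability. -/
def MDP.ValidInf (M : MDP S A AP) (w : InfPath S A) : Prop :=
  ∀ i : ℕ,
    (w i).1 ∈ M.enabled (M.stateAtI w i) ∧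
      0 < M.P (M.stateAtI w i) (w i).1 (M.stateAtI w (i + 1))

/-- A policy of the MDP chooses an enabled action after every finite path. -/
def MDP.IsPolicy (M : MDP S A AP) (π : Policy S A) : Prop :=
  ∀ l : FinPath S A, π l ∈ M.enabled (M.lastState l)

/-- The finite prefix of length `n` of an infinite path. -/
def takeI (w : InfPath S A) (n : ℕ) : FinPath S A :=
  (List.range n).map w

/-- A finite path is `π`-consistent if each of its actions is the one `π`
assigns to the corresponding proper prefix. -/
def ConsistentFin (π : Policy S A) (l : FinPath S A) : Prop :=
  ∀ i (h : i < l.length), (l.get ⟨i, h⟩).1 = π (l.take i)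

/-- `Paths^π(s_init)`: the set of `π`-consistent infinite paths of the MDP. -/
def MDP.PathsSet (M : MDP S A AP) (π : Policy S A) : Set (InfPath S A) :=
  { w | M.ValidInf w ∧ ∀ i : ℕ, (w i).1 = π (takeI w i) }

/-- The cylinder set of a finite path: all `π`-consistent infinite paths of the
MDP extending it. -/
def MDP.Cyl (M : MDP S A AP) (π : Policy S A) (l : FinPath S A) :
    Set (InfPath S A) :=
  { w | w ∈ M.PathsSet π ∧ takeI w l.length = l }

/-- The σ-algebra generated by the cylinder sets of (valid, `π`-consistent)
finite paths. -/
def MDP.cylSigma (M : MDP S A AP) (π : Policy S A) :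
    MeasurableSpace (InfPath S A) :=
  MeasurableSpace.generateFrom
    { C | ∃ l : FinPath S A, M.ValidFin l ∧ ConsistentFin π l ∧ C = M.Cyl π l }

/-- The product of the transition probabilities along a finite path starting
in a given state. -/
noncomputable def MDP.weightFrom (M : MDP S A AP) : S → List (A × S) → ℝ≥0∞
  | _, [] => 1
  | s, (a, s') :: rest => M.P s a s' * M.weightFrom s' rest

/-- `∏_{0 ≤ i < n} P(s_i, a_i, s_{i+1})` for a finite path from `init`. -/
noncomputable def MDP.pathWeight (M : MDP S A AP) (l : FinPath S A) : ℝ≥0∞ :=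
  M.weightFrom M.init l

/-- `μ` is the probability measure `Pr^π` induced by the policy `π`: it assigns
to the cylinder set of every valid `π`-consistent finite path the product of
the transition probabilities along that path. -/
def IsCylMeasure (M : MDP S A AP) (π : Policy S A)
    (μ : @MeasureTheory.Measure (InfPath S A) (M.cylSigma π)) : Prop :=
  ∀ l : FinPath S A, M.ValidFin l → ConsistentFin π l →
    μ (M.Cyl π l) = M.pathWeight l

/-- `{w ∈ Paths^π(s_init) : pre(w) ∩ Paths_fin,φ ≠ ∅}`: the `π`-consistent
infinite paths having some finite prefix in the given set of finite paths. -/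
def MDP.SatFinSet (M : MDP S A AP) (π : Policy S A)
    (Pfin : Set (FinPath S A)) : Set (InfPath S A) :=
  { w | w ∈ M.PathsSet π ∧ ∃ l ∈ Pfin, takeI w l.length = l }

/-- Syntax of LTL / LTLf formulas over atomic propositions `α`. -/
inductive LTL (α : Type) : Type
  | tru : LTL α
  | atom : α → LTL α
  | neg : LTL α → LTL α
  | conj : LTL α → LTL α → LTL α
  | next : LTL α → LTL α
  | untl : LTL α → LTL α → LTL α

variable {α : Type}

/-- Infinite-trace (LTL) satisfaction `σ, i ⊨ φ`. -/
def LTL.SatI (σ : ℕ → Set α) : ℕ → LTL α → Prop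
  | _, .tru => True
  | i, .atom p => p ∈ σ i
  | i, .neg φ => ¬ LTL.SatI σ i φ
  | i, .conj φ ψ => LTL.SatI σ i φ ∧ LTL.SatI σ i ψ
  | i, .next φ => LTL.SatI σ (i + 1) φ
  | i, .untl φ ψ =>
      ∃ j : ℕ, i ≤ j ∧ LTL.SatI σ j ψ ∧ ∀ k : ℕ, i ≤ k → k < j → LTL.SatI σ k φ

/-- Infinite-trace (LTL) satisfaction `σ ⊨ φ`. -/
def LTL.Sat (σ : ℕ → Set α) (φ : LTL α) : Prop := LTL.SatI σ 0 φ

/-- `G φ` abbreviates `¬(⊤ U ¬φ)`. -/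
def LTL.G (φ : LTL α) : LTL α := .neg (.untl .tru (.neg φ))

/-- Finite-trace (LTLf) satisfaction `ρ, i ⊨ φ` (positions outside the trace
carry the empty letter, which is never consulted from a position inside a
nonempty trace). -/
def LTL.SatFI (ρ : List (Set α)) : ℕ → LTL α → Prop
  | _, .tru => True
  | i, .atom p => p ∈ ρ.getD i ∅
  | i, .neg φ => ¬ LTL.SatFI ρ i φ
  | i, .conj φ ψ => LTL.SatFI ρ i φ ∧ LTL.SatFI ρ i ψ
  | i, .next φ => i + 1 < ρ.length ∧ LTL.SatFI ρ (i + 1) φ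
  | i, .untl φ ψ =>
      ∃ j : ℕ, i ≤ j ∧ j < ρ.length ∧ LTL.SatFI ρ j ψ ∧
        ∀ k : ℕ, i ≤ k → k < j → LTL.SatFI ρ k φ

/-- Finite-trace (LTLf) satisfaction `ρ ⊨ φ`. -/
def LTL.SatF (ρ : List (Set α)) (φ : LTL α) : Prop := LTL.SatFI ρ 0 φ

/-- The translation `t` from LTLf formulas over `α` to LTL formulas over
`Option α`, where the fresh proposition `alive` is `none`. -/
def LTL.trans : LTL α → LTL (Option α)
  | .tru => .tru
  | .atom p => .conj (.atom (some p)) (.atom none)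
  | .neg φ => .neg φ.trans
  | .conj φ ψ => .conj φ.trans ψ.trans
  | .next φ => .next (.conj (.atom none) φ.trans)
  | .untl φ ψ => .untl φ.trans (.conj (.atom none) ψ.trans)

/-- `g(φ) = t(φ) ∧ (alive U (G ¬alive))`. -/
def LTL.gtrans (φ : LTL α) : LTL (Option α) :=
  .conj φ.trans (.untl (.atom none) (LTL.G (.neg (.atom none))))

/-- The lift of a finite trace over `2^AP` to an infinite trace over
`2^(AP ∪ {alive})`: the `i`-th letter is `ρ_i ∪ {alive}` for `i < |ρ|`
and `∅` afterwards. -/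
def liftTrace (ρ : List (Set α)) : ℕ → Set (Option α) := fun i =>
  if i < ρ.length then insert none (Option.some '' ρ.getD i ∅) else ∅

/-- `{w ∈ Paths^π(s_init) : w ⊨ φ}` for an LTLf formula `φ`: some finite
prefix of `w` has labeling `L(s_0)…L(s_k)` in `L(φ)`. -/
def MDP.SatPhiSet (M : MDP S A AP) (π : Policy S A) (φ : LTL AP) :
    Set (InfPath S A) :=
  { w | w ∈ M.PathsSet π ∧ ∃ k : ℕ,
      LTL.SatF ((List.range (k + 1)).map fun i => M.label (M.stateAtI w i)) φ }

/-- `{w ∈ Paths^π(s_init) : L(w) ⊨ ψ}` for an LTL formula `ψ`: the labeling of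
the infinite path `w` satisfies `ψ` under infinite-trace semantics. -/
def MDP.SatLTLSet {S A AP' : Type} (M : MDP S A AP') (π : Policy S A)
    (ψ : LTL AP') : Set (InfPath S A) :=
  { w | w ∈ M.PathsSet π ∧ LTL.Sat (fun i => M.label (M.stateAtI w i)) ψ }

/-- The product MDP `M × A` of an MDP and a DFA over the alphabet `Set AP`. -/
noncomputable def MDP.prod {Q : Type} [DecidableEq Q] (M : MDP S A AP)
    (D : DFA (Set AP) Q) : MDP (S × Q) A AP where
  P x a y := if y.2 = D.step x.2 (M.label y.1) then M.P x.1 a y.1 else 0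
  enabled x := M.enabled x.1
  init := (M.init, D.step D.start (M.label M.init))
  label x := M.label x.1

/-- Projection of a finite path of the product MDP onto a finite path of the
original MDP. -/
def projFin {Q : Type} : FinPath (S × Q) A → FinPath S A :=
  List.map fun p => (p.1, p.2.1)

/-- The DFA state reached after reading the labeling `L(s_0)…L(s_n)` of a
finite path from the initial DFA state. -/
def MDP.dfaState {Q : Type} (M : MDP S A AP) (D : DFA (Set AP) Q)
    (l : FinPath S A) : Q :=
  D.eval ((List.range (l.length + 1)).map fun i => M.label (M.stateAtF l i))

/-!
A path of `M` determines the run of the deterministic automaton on its labels, so the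
valid finite paths of `M` and of `M × D` correspond bijectively, with the same weights; a run
satisfies `φ` exactly when its lift reaches an accepting state. Composing with the lift sends the
policies of the product onto those of `M`, and corresponding policies give these two events the same
probability: each event is a disjoint union of cylinders over first-hitting histories, which are
countably many because their cylinders are disjoint with positive probability.
-/

section FinitePaths

variable (M : MDP S A AP)

@[simp]
theorem MDP.lastState_concat (l : FinPath S A) (x : A × S) : M.lastState (l ++ [x]) = x.2 := by
  simp [MDP.lastState]

theorem MDP.stateAtF_succ {l : FinPath S A} {i : ℕ} (h : i < l.length) :
    M.stateAtF l (i + 1) = l[i].2 := by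
  rw [MDP.stateAtF, List.take_succ_eq_append_getElem h, M.lastState_concat]

theorem MDP.weightFrom_eq_prod (s : S) (l : List (A × S)) :
    M.weightFrom s l =
      ∏ i : Fin l.length, M.P (((l.take i).map Prod.snd).getLastD s) l[i].1 l[i].2 := by
  induction l generalizing s with
  | nil => simp [MDP.weightFrom]
  | cons x l ih =>
    simp only [MDP.weightFrom, ih, List.length_cons, Fin.prod_univ_succ]
    simp [List.getLastD_nil, List.getLastD_cons, -List.getLastD_eq_getLast?]

theorem MDP.pathWeight_eq_prod (l : FinPath S A) :
    M.pathWeight l = ∏ i : Fin l.length, M.P (M.stateAtF l i) l[i].1 l[i].2 :=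
  M.weightFrom_eq_prod M.init l

theorem MDP.pathWeight_pos {l : FinPath S A} (hl : M.ValidFin l) : 0 < M.pathWeight l := by
  rw [M.pathWeight_eq_prod, pos_iff_ne_zero, Finset.prod_ne_zero_iff]
  exact fun i _ => (hl i i.isLt).2.ne'

end FinitePaths

section InfinitePaths

@[simp]
theorem length_takeI (w : InfPath S A) (n : ℕ) : (takeI w n).length = n := by
  simp [takeI]

@[simp]
theorem getElem_takeI (w : InfPath S A) {n i : ℕ} (h : i < (takeI w n).length) :
    (takeI w n)[i] = w i := by
  simp [takeI]

theorem take_takeI (w : InfPath S A) {i n : ℕ} (h : i ≤ n) : (takeI w n).take i = takeI w i := by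
  simp [takeI, ← List.map_take, List.take_range, h]

theorem takeI_succ (w : InfPath S A) (n : ℕ) : takeI w (n + 1) = takeI w n ++ [w n] := by
  simp [takeI, List.range_succ]

@[simp]
theorem MDP.lastState_takeI (M : MDP S A AP) (w : InfPath S A) (n : ℕ) :
    M.lastState (takeI w n) = M.stateAtI w n := by
  cases n with
  | zero => rfl
  | succ n => rw [takeI_succ, M.lastState_concat, MDP.stateAtI]

theorem MDP.stateAtF_takeI (M : MDP S A AP) (w : InfPath S A) {i n : ℕ} (h : i ≤ n) :
    M.stateAtF (takeI w n) i = M.stateAtI w i := by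
  rw [MDP.stateAtF, take_takeI w h, M.lastState_takeI]

theorem MDP.ValidInf.validFin_takeI {M : MDP S A AP} {w : InfPath S A} (hw : M.ValidInf w)
    (n : ℕ) : M.ValidFin (takeI w n) := by
  intro i hi
  rw [M.stateAtF_takeI w (by simpa using hi.le), List.get_eq_getElem, getElem_takeI]
  exact hw i

theorem consistentFin_takeI {π : Policy S A} {w : InfPath S A}
    (hw : ∀ i, (w i).1 = π (takeI w i)) (n : ℕ) : ConsistentFin π (takeI w n) := by
  intro i hi
  rw [take_takeI w (by simpa using hi.le), List.get_eq_getElem, getElem_takeI]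
  exact hw i

theorem MDP.mem_satFinSet_iff {M : MDP S A AP} {π : Policy S A} {B : Set (FinPath S A)}
    {w : InfPath S A} : w ∈ M.SatFinSet π B ↔ w ∈ M.PathsSet π ∧ ∃ n, takeI w n ∈ B := by
  refine and_congr_right fun _ => ⟨?_, ?_⟩
  · rintro ⟨l, hl, hw⟩
    exact ⟨l.length, hw.symm ▸ hl⟩
  · rintro ⟨n, hn⟩
    exact ⟨_, hn, by rw [length_takeI]⟩

end InfinitePaths

section FirstHits

open MeasureTheory

/-- The valid `π`-consistent finite paths that lie in `B` and have no proper prefix in `B`: the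
possible histories at the first time a run of `M` under `π` hits `B`. -/
def MDP.firstHits (M : MDP S A AP) (π : Policy S A) (B : Set (FinPath S A)) :
    Set (FinPath S A) :=
  { l | M.ValidFin l ∧ ConsistentFin π l ∧ l ∈ B ∧ ∀ i < l.length, l.take i ∉ B }

variable {M : MDP S A AP} {π : Policy S A} {B : Set (FinPath S A)}

theorem MDP.satFinSet_eq_biUnion_cyl :
    M.SatFinSet π B = ⋃ l ∈ M.firstHits π B, M.Cyl π l := by
  classical
  ext w
  simp only [MDP.mem_satFinSet_iff, Set.mem_iUnion, exists_prop]
  constructor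
  · rintro ⟨hw, hB⟩
    refine ⟨takeI w (Nat.find hB), ⟨hw.1.validFin_takeI _, consistentFin_takeI hw.2 _,
      Nat.find_spec hB, fun i hi => ?_⟩, hw, by rw [length_takeI]⟩
    rw [length_takeI] at hi
    rw [take_takeI w hi.le]
    exact Nat.find_min hB hi
  · rintro ⟨l, hl, hw, hwl⟩
    exact ⟨hw, l.length, hwl.symm ▸ hl.2.2.1⟩

theorem MDP.pairwiseDisjoint_cyl_firstHits : (M.firstHits π B).PairwiseDisjoint (M.Cyl π) := by
  have length_le : ∀ {l l' w}, l ∈ M.firstHits π B → l' ∈ M.firstHits π B → w ∈ M.Cyl π l →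
      w ∈ M.Cyl π l' → l'.length ≤ l.length := by
    intro l l' w hl hl' hw hw'
    by_contra! hlt
    refine hl'.2.2.2 l.length hlt ?_
    rw [← hw'.2, take_takeI w hlt.le, hw.2]
    exact hl.2.2.1
  intro l hl l' hl' hne
  refine Set.disjoint_left.2 fun w hw hw' => hne ?_
  rw [← hw.2, ← hw'.2, (length_le hl' hl hw' hw).antisymm (length_le hl hl' hw hw')]

theorem MDP.measurableSet_cyl {l : FinPath S A} (hl : M.ValidFin l) (hπ : ConsistentFin π l) :
    MeasurableSet[M.cylSigma π] (M.Cyl π l) :=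
  MeasurableSpace.measurableSet_generateFrom ⟨l, hl, hπ, rfl⟩

variable {μ : @Measure (InfPath S A) (M.cylSigma π)}

theorem IsCylMeasure.measure_pathsSet (hμ : IsCylMeasure M π μ) : μ (M.PathsSet π) = 1 := by
  have cyl_nil : M.Cyl π [] = M.PathsSet π := by
    ext w
    simp [MDP.Cyl, takeI]
  rw [← cyl_nil, hμ [] nofun nofun, MDP.pathWeight, MDP.weightFrom]

theorem IsCylMeasure.countable_firstHits (hμ : IsCylMeasure M π μ) (B : Set (FinPath S A)) :
    (M.firstHits π B).Countable := by
  let _ := M.cylSigma π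
  have measure_ne_top : μ (⋃ l : M.firstHits π B, M.Cyl π l) ≠ ∞ := by
    refine ne_top_of_le_ne_top ENNReal.one_ne_top (hμ.measure_pathsSet ▸ ?_)
    exact measure_mono (Set.iUnion_subset fun l w hw => hw.1)
  have countable_pos :=
    Measure.countable_meas_pos_of_disjoint_of_meas_iUnion_ne_top μ
      (fun l : M.firstHits π B => MDP.measurableSet_cyl l.2.1 l.2.2.1)
      (MDP.pairwiseDisjoint_cyl_firstHits.subtype _ _) measure_ne_top
  refine Set.countable_univ_iff.1 (countable_pos.mono fun l _ => ?_)
  rw [Set.mem_ofPred_eq, hμ l l.2.1 l.2.2.1]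
  exact M.pathWeight_pos l.2.1

theorem IsCylMeasure.measure_satFinSet (hμ : IsCylMeasure M π μ) (B : Set (FinPath S A)) :
    μ (M.SatFinSet π B) = ∑' l : M.firstHits π B, M.pathWeight l := by
  let _ := M.cylSigma π
  rw [MDP.satFinSet_eq_biUnion_cyl,
    measure_biUnion (hμ.countable_firstHits B) MDP.pairwiseDisjoint_cyl_firstHits
      fun l hl => MDP.measurableSet_cyl hl.1 hl.2.1]
  exact tsum_congr fun l => hμ l l.2.1 l.2.2.1

end FirstHits

section Lift

variable {Q : Type}

@[simp]
theorem length_projFin (l : FinPath (S × Q) A) : (projFin l).length = l.length :=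
  List.length_map _

@[simp]
theorem getElem_projFin (l : FinPath (S × Q) A) {i : ℕ} (h : i < (projFin l).length) :
    (projFin l)[i] = ((l[i]'(by simpa using h)).1, (l[i]'(by simpa using h)).2.1) :=
  List.getElem_map _

variable (M : MDP S A AP) (D : DFA (Set AP) Q)

/-- The lift of a finite path of `M` to the product `M × D`: each visited state is paired with the
state that `D` is in after reading the labels up to and including it. -/
def MDP.liftFin (l : FinPath S A) : FinPath (S × Q) A :=
  l.mapIdx fun i x => (x.1, x.2, M.dfaState D (l.take (i + 1)))

@[simp]
theorem MDP.length_liftFin (l : FinPath S A) : (M.liftFin D l).length = l.length :=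
  List.length_mapIdx

@[simp]
theorem MDP.getElem_liftFin (l : FinPath S A) {i : ℕ} (h : i < (M.liftFin D l).length) :
    (M.liftFin D l)[i] = ((l[i]'(by simpa using h)).1, (l[i]'(by simpa using h)).2,
      M.dfaState D (l.take (i + 1))) :=
  List.getElem_mapIdx

theorem MDP.take_liftFin (l : FinPath S A) (i : ℕ) :
    (M.liftFin D l).take i = M.liftFin D (l.take i) := by
  refine List.ext_getElem (by simp) fun j hj _ => ?_
  have hji : j + 1 ≤ i := by simp at hj; omega
  simp [List.take_take, hji]

theorem projFin_liftFin (l : FinPath S A) : projFin (M.liftFin D l) = l :=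
  List.ext_getElem (by simp) fun _ _ _ => by simp

theorem MDP.dfaState_concat (l : FinPath S A) (x : A × S) :
    M.dfaState D (l ++ [x]) = D.step (M.dfaState D l) (M.label x.2) := by
  have state_prefix : ∀ i ∈ List.range (l.length + 1),
      M.label (M.stateAtF (l ++ [x]) i) = M.label (M.stateAtF l i) := by
    intro i hi
    rw [MDP.stateAtF, List.take_append_of_le_length (by simpa [Nat.lt_succ_iff] using hi),
      MDP.stateAtF]
  have state_last : M.stateAtF (l ++ [x]) (l.length + 1) = x.2 := by
    simp [M.stateAtF_succ]
  rw [MDP.dfaState, List.length_append, List.length_singleton, List.range_succ, List.map_append,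
    List.map_singleton, DFA.eval_append_singleton, state_last, List.map_congr_left state_prefix,
    MDP.dfaState]

theorem MDP.dfaState_take_succ {l : FinPath S A} {i : ℕ} (h : i < l.length) :
    M.dfaState D (l.take (i + 1)) = D.step (M.dfaState D (l.take i)) (M.label l[i].2) := by
  rw [List.take_succ_eq_append_getElem h, M.dfaState_concat]

theorem MDP.dfaState_takeI (w : InfPath S A) (n : ℕ) :
    M.dfaState D (takeI w n) =
      D.eval ((List.range (n + 1)).map fun i => M.label (M.stateAtI w i)) := by
  rw [MDP.dfaState, length_takeI]
  congr 1
  refine List.map_congr_left fun i hi => ?_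
  rw [M.stateAtF_takeI w (by simpa [Nat.lt_succ_iff] using hi)]

theorem consistentFin_liftFin {σ : Policy (S × Q) A} {l : FinPath S A} :
    ConsistentFin σ (M.liftFin D l) ↔ ConsistentFin (σ ∘ M.liftFin D) l := by
  simp only [ConsistentFin, M.length_liftFin, List.get_eq_getElem, M.getElem_liftFin,
    M.take_liftFin, Function.comp_apply]

variable [DecidableEq Q]

theorem MDP.lastState_liftFin (l : FinPath S A) :
    (M.prod D).lastState (M.liftFin D l) = (M.lastState l, M.dfaState D l) := by
  obtain rfl | ⟨l, x, rfl⟩ := l.eq_nil_or_concat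
  · rfl
  · simp [MDP.liftFin, List.take_of_length_le]

theorem MDP.stateAtF_liftFin (l : FinPath S A) (i : ℕ) :
    (M.prod D).stateAtF (M.liftFin D l) i = (M.stateAtF l i, M.dfaState D (l.take i)) := by
  rw [MDP.stateAtF, M.take_liftFin, M.lastState_liftFin, MDP.stateAtF]

theorem MDP.prod_P_of_eq_step {s s' : S} {q q' : Q} (a : A) (h : q' = D.step q (M.label s')) :
    (M.prod D).P (s, q) a (s', q') = M.P s a s' :=
  if_pos h

theorem MDP.eq_step_of_prod_P_pos {x y : S × Q} {a : A} (h : 0 < (M.prod D).P x a y) :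
    y.2 = D.step x.2 (M.label y.1) := by
  by_contra hne
  exact h.ne' (if_neg hne)

theorem MDP.validFin_liftFin {l : FinPath S A} :
    (M.prod D).ValidFin (M.liftFin D l) ↔ M.ValidFin l := by
  simp only [MDP.ValidFin, M.length_liftFin, List.get_eq_getElem, M.getElem_liftFin,
    M.stateAtF_liftFin]
  refine forall₂_congr fun i hi => and_congr Iff.rfl ?_
  rw [M.prod_P_of_eq_step D _ (M.dfaState_take_succ D hi)]

theorem MDP.pathWeight_liftFin (l : FinPath S A) :
    (M.prod D).pathWeight (M.liftFin D l) = M.pathWeight l := by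
  rw [MDP.pathWeight_eq_prod, MDP.pathWeight_eq_prod]
  refine Fintype.prod_equiv (finCongr (M.length_liftFin D l)) _ _ fun i => ?_
  simp only [Fin.getElem_fin, M.getElem_liftFin, M.stateAtF_liftFin, finCongr_apply, Fin.val_cast]
  exact M.prod_P_of_eq_step D _ (M.dfaState_take_succ D _)

variable {M D}

theorem MDP.ValidFin.snd_stateAtF {l : FinPath (S × Q) A} (hl : (M.prod D).ValidFin l) {i : ℕ}
    (hi : i ≤ l.length) :
    ((M.prod D).stateAtF l i).2 = M.dfaState D ((projFin l).take i) := by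
  induction i with
  | zero => rfl
  | succ i ih =>
    rw [M.dfaState_take_succ D (by simpa using hi), ← ih (by omega), MDP.stateAtF_succ _ hi,
      getElem_projFin]
    exact M.eq_step_of_prod_P_pos D (hl i hi).2

theorem MDP.ValidFin.liftFin_projFin {l : FinPath (S × Q) A} (hl : (M.prod D).ValidFin l) :
    M.liftFin D (projFin l) = l := by
  refine List.ext_getElem (by simp) fun i _ hi => ?_
  rw [M.getElem_liftFin, ← hl.snd_stateAtF hi, MDP.stateAtF_succ _ hi, getElem_projFin]

theorem MDP.image_liftFin_firstHits (σ : Policy (S × Q) A) (B : Set (FinPath (S × Q) A)) :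
    M.liftFin D '' M.firstHits (σ ∘ M.liftFin D) (M.liftFin D ⁻¹' B) =
      (M.prod D).firstHits σ B := by
  have liftFin_mem_iff (l : FinPath S A) : M.liftFin D l ∈ (M.prod D).firstHits σ B ↔
      l ∈ M.firstHits (σ ∘ M.liftFin D) (M.liftFin D ⁻¹' B) := by
    simp only [MDP.firstHits, Set.mem_ofPred_eq, M.validFin_liftFin, consistentFin_liftFin,
      M.length_liftFin, M.take_liftFin, Set.mem_preimage]
  refine Set.Subset.antisymm (Set.image_subset_iff.2 fun l hl => (liftFin_mem_iff l).2 hl) ?_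
  intro l hl
  have hlift : M.liftFin D (projFin l) = l := hl.1.liftFin_projFin
  exact ⟨projFin l, (liftFin_mem_iff _).1 (by rwa [hlift]), hlift⟩

theorem IsCylMeasure.measure_satFinSet_comp_liftFin {σ : Policy (S × Q) A}
    {μ : @MeasureTheory.Measure (InfPath S A) (M.cylSigma (σ ∘ M.liftFin D))}
    {ν : @MeasureTheory.Measure (InfPath (S × Q) A) ((M.prod D).cylSigma σ)}
    (hμ : IsCylMeasure M (σ ∘ M.liftFin D) μ) (hν : IsCylMeasure (M.prod D) σ ν)
    (B : Set (FinPath (S × Q) A)) :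
    μ (M.SatFinSet (σ ∘ M.liftFin D) (M.liftFin D ⁻¹' B)) = ν ((M.prod D).SatFinSet σ B) := by
  have liftFin_injective : Function.Injective (M.liftFin D) :=
    Function.LeftInverse.injective (projFin_liftFin M D)
  rw [hμ.measure_satFinSet, hν.measure_satFinSet, ← MDP.image_liftFin_firstHits,
    tsum_image _ liftFin_injective.injOn]
  exact tsum_congr fun l => (M.pathWeight_liftFin D l).symm

end Lift

section Policies

variable {Q : Type} [DecidableEq Q] {M : MDP S A AP} {D : DFA (Set AP) Q}

theorem MDP.fst_lastState_prod (l : FinPath (S × Q) A) :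
    ((M.prod D).lastState l).1 = M.lastState (projFin l) := by
  obtain rfl | ⟨l, x, rfl⟩ := l.eq_nil_or_concat
  · rfl
  · simp [projFin]

theorem MDP.IsPolicy.comp_projFin {π : Policy S A} (hπ : M.IsPolicy π) :
    (M.prod D).IsPolicy (π ∘ projFin) := by
  intro l
  change π (projFin l) ∈ M.enabled ((M.prod D).lastState l).1
  rw [MDP.fst_lastState_prod]
  exact hπ (projFin l)

theorem MDP.IsPolicy.comp_liftFin {σ : Policy (S × Q) A} (hσ : (M.prod D).IsPolicy σ) :
    M.IsPolicy (σ ∘ M.liftFin D) := by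
  intro l
  have enabled_lift := hσ (M.liftFin D l)
  rwa [M.lastState_liftFin] at enabled_lift

end Policies

section Acceptance

variable {Q : Type} {M : MDP S A AP} {D : DFA (Set AP) Q}

theorem MDP.satPhiSet_eq_satFinSet {φ : LTL AP}
    (hD : ∀ ρ : List (Set AP), ρ ∈ D.accepts ↔ LTL.SatF ρ φ) (π : Policy S A) :
    M.SatPhiSet π φ = M.SatFinSet π { l | M.dfaState D l ∈ D.accept } := by
  ext w
  simp only [MDP.SatPhiSet, MDP.mem_satFinSet_iff, Set.mem_ofPred_eq, M.dfaState_takeI, ← hD,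
    DFA.mem_accepts]

theorem MDP.setOf_reach_eq_satFinSet (π : Policy S A) (F : Set S) :
    { w | w ∈ M.PathsSet π ∧ ∃ i, M.stateAtI w i ∈ F } =
      M.SatFinSet π { l | M.lastState l ∈ F } := by
  ext w
  simp only [MDP.mem_satFinSet_iff, Set.mem_ofPred_eq, M.lastState_takeI]

theorem IsCylMeasure.measure_satPhiSet_comp_liftFin [DecidableEq Q] {φ : LTL AP}
    {σ : Policy (S × Q) A}
    {μ : @MeasureTheory.Measure (InfPath S A) (M.cylSigma (σ ∘ M.liftFin D))}
    {ν : @MeasureTheory.Measure (InfPath (S × Q) A) ((M.prod D).cylSigma σ)}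
    (hμ : IsCylMeasure M (σ ∘ M.liftFin D) μ)
    (hD : ∀ ρ : List (Set AP), ρ ∈ D.accepts ↔ LTL.SatF ρ φ)
    (hν : IsCylMeasure (M.prod D) σ ν) :
    μ (M.SatPhiSet (σ ∘ M.liftFin D) φ) =
      ν { w | w ∈ (M.prod D).PathsSet σ ∧
        ∃ i, ((M.prod D).stateAtI w i).2 ∈ D.accept } := by
  have accept_lift : { l | M.dfaState D l ∈ D.accept } =
      M.liftFin D ⁻¹' { l | (M.prod D).lastState l ∈ Prod.snd ⁻¹' D.accept } := by
    ext l
    simp only [Set.mem_preimage, Set.mem_ofPred_eq, M.lastState_liftFin]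
  rw [MDP.satPhiSet_eq_satFinSet hD, accept_lift, hμ.measure_satFinSet_comp_liftFin hν]
  exact congrArg ν (MDP.setOf_reach_eq_satFinSet σ _).symm

end Acceptance

theorem max_prob_ltlf_eq_max_reach_prob_prod_general
    {S A AP Q : Type} [DecidableEq Q]
    (M : MDP S A AP) (φ : LTL AP) (D : DFA (Set AP) Q)
    (hD : ∀ ρ : List (Set AP), ρ ∈ D.accepts ↔ LTL.SatF ρ φ)
    (μf : ∀ π : Policy S A,
      @MeasureTheory.Measure (InfPath S A) (M.cylSigma π))
    (hμf : ∀ π : Policy S A, M.IsPolicy π → IsCylMeasure M π (μf π))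
    (μg : ∀ σp : Policy (S × Q) A,
      @MeasureTheory.Measure (InfPath (S × Q) A) ((M.prod D).cylSigma σp))
    (hμg : ∀ σp : Policy (S × Q) A,
      (M.prod D).IsPolicy σp → IsCylMeasure (M.prod D) σp (μg σp)) :
    (⨆ (π : Policy S A) (_ : M.IsPolicy π), μf π (M.SatPhiSet π φ)) =
      ⨆ (σp : Policy (S × Q) A) (_ : (M.prod D).IsPolicy σp),
        μg σp { w | w ∈ (M.prod D).PathsSet σp ∧
          ∃ i : ℕ, ((M.prod D).stateAtI w i).2 ∈ D.accept } := by
  let pullback (σ : { σ // (M.prod D).IsPolicy σ }) : { π // M.IsPolicy π } :=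
    ⟨σ ∘ M.liftFin D, σ.2.comp_liftFin⟩
  have pullback_surjective : Function.Surjective pullback := fun ⟨π, hπ⟩ =>
    ⟨⟨π ∘ projFin, hπ.comp_projFin⟩,
      Subtype.ext (funext fun l => congrArg π (projFin_liftFin M D l))⟩
  rw [iSup_subtype', iSup_subtype']
  exact (pullback_surjective.iSup_congr pullback fun σ =>
    (hμf _ (pullback σ).2).measure_satPhiSet_comp_liftFin hD (hμg σ σ.2)).symm

/-- if the language of the DFA `A_φ` equals `L(φ)`, then the
maximal probability of satisfying the LTLf formula `φ` on `M` equals the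
maximal probability of reaching an accepting state in the product `M × A_φ`. -/
theorem max_prob_ltlf_eq_max_reach_prob_prod
    {S A AP Q : Type} [Fintype S] [Fintype A] [Fintype AP] [Fintype Q]
    [DecidableEq Q]
    (M : MDP S A AP) (hM : M.IsWF) (φ : LTL AP) (D : DFA (Set AP) Q)
    (hD : ∀ ρ : List (Set AP), ρ ∈ D.accepts ↔ LTL.SatF ρ φ)
    (μf : ∀ π : Policy S A,
      @MeasureTheory.Measure (InfPath S A) (M.cylSigma π))
    (hμf : ∀ π : Policy S A, M.IsPolicy π → IsCylMeasure M π (μf π))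
    (μg : ∀ σp : Policy (S × Q) A,
      @MeasureTheory.Measure (InfPath (S × Q) A) ((M.prod D).cylSigma σp))
    (hμg : ∀ σp : Policy (S × Q) A,
      (M.prod D).IsPolicy σp → IsCylMeasure (M.prod D) σp (μg σp)) :
    (⨆ (π : Policy S A) (_ : M.IsPolicy π), μf π (M.SatPhiSet π φ)) =
      ⨆ (σp : Policy (S × Q) A) (_ : (M.prod D).IsPolicy σp),
        μg σp { w | w ∈ (M.prod D).PathsSet σp ∧
          ∃ i : ℕ, ((M.prod D).stateAtI w i).2 ∈ D.accept } :=
  max_prob_ltlf_eq_max_reach_prob_prod_general M φ D hD μf hμf μg hμg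

end LTLfMDP
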